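/- arXiv:1910.10786 — 3 statements merged into one kernel-verified Lean document; each statement's English description precedes it below -/
import Mathlib

section
/- Let S ≥ 1, let w ∈ ℝ^S with w_i > 0 for all i, let p̄ ∈ Δ^S, let ψ ≥ 0, and let z ∈ ℝ^S. Define the ambiguity set 𝒫 = { p ∈ Δ^S : ‖p − p̄‖_{1,w} ≤ ψ } and its span along z as β(w,ψ) = sup { (p₁ − p₂)ᵀz : p₁, p₂ ∈ 𝒫 }. Then for every λ ∈ ℝ, β(w,ψ) ≤ 2·ψ·max_{1≤i≤S} |z_i − λ| / w_i. (Lemma 4.1 for weighted L1 ambiguity sets.) -/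
/-! The entries of `p₁ - p₂` sum to zero, so `z` may be replaced by `z - lam`.
Termwise, `(p₁ i - p₂ i) * (z i - lam) ≤ (w i * |p₁ i - p₂ i|) * (|z i - lam| / w i)`
(Hölder duality between the weighted L1 norm and the L∞ norm with inverse weights), and the
triangle inequality through `pbar` bounds the weighted L1 norm of `p₁ - p₂` by `2 * ψ`. -/

open Finset

/-- Weighted L1 norm: `‖y‖_{1,w} = ∑ i, w i * |y i|`. -/
noncomputable def wL1 {S : ℕ} (w y : Fin S → ℝ) : ℝ := ∑ i, w i * |y i|

/-- The probability simplex in `ℝ^S`. -/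
def simplex (S : ℕ) : Set (Fin S → ℝ) :=
  {p | (∀ i, 0 ≤ p i) ∧ ∑ i, p i = 1}

/-- Lemma 4.1 for weighted L1 ambiguity sets: the span of the ambiguity set
along `z` is bounded by `2 ψ · max_i |z i − λ| / w i`. -/
theorem span_bound_weighted_l1 {S : ℕ} (hS : 1 ≤ S)
    (w : Fin S → ℝ) (hw : ∀ i, 0 < w i)
    (pbar : Fin S → ℝ) (hpbar : pbar ∈ simplex S)
    (ψ : ℝ) (hψ : 0 ≤ ψ) (z : Fin S → ℝ) (lam : ℝ) :
    sSup {t : ℝ | ∃ p₁ ∈ {p ∈ simplex S | wL1 w (fun i => p i - pbar i) ≤ ψ},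
        ∃ p₂ ∈ {p ∈ simplex S | wL1 w (fun i => p i - pbar i) ≤ ψ},
          t = ∑ i, (p₁ i - p₂ i) * z i}
      ≤ 2 * ψ * ⨆ i, |z i - lam| / w i := by
  -- Nonnegativity of the right-hand side covers the default value of `sSup ∅`.
  have hM : 0 ≤ ⨆ i, |z i - lam| / w i :=
    Real.iSup_nonneg fun i => div_nonneg (abs_nonneg _) (hw i).le
  refine Real.sSup_le ?_ (by positivity)
  rintro t ⟨p₁, ⟨⟨-, hs₁⟩, h₁⟩, p₂, ⟨⟨-, hs₂⟩, h₂⟩, rfl⟩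
  unfold wL1 at h₁ h₂
  have hshift : ∑ i, (p₁ i - p₂ i) * z i = ∑ i, (p₁ i - p₂ i) * (z i - lam) := by
    simp only [mul_sub, Finset.sum_sub_distrib, ← Finset.sum_mul, hs₁, hs₂]
    ring
  rw [hshift]
  set M := ⨆ i, |z i - lam| / w i with hMdef
  have hz : ∀ i, |z i - lam| ≤ M * w i := fun i =>
    (div_le_iff₀ (hw i)).1
      (le_ciSup (f := fun i => |z i - lam| / w i) (Set.finite_range _).bddAbove i)
  calc ∑ i, (p₁ i - p₂ i) * (z i - lam)
      ≤ ∑ i, (w i * |p₁ i - pbar i| + w i * |p₂ i - pbar i|) * M := by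
        refine Finset.sum_le_sum fun i _ => ?_
        have htri : |p₁ i - p₂ i| ≤ |p₁ i - pbar i| + |p₂ i - pbar i| := by
          rw [abs_sub_comm (p₂ i)]
          exact abs_sub_le _ _ _
        calc (p₁ i - p₂ i) * (z i - lam)
            ≤ |p₁ i - p₂ i| * |z i - lam| := by
              rw [← abs_mul]
              exact le_abs_self _
          _ ≤ (|p₁ i - pbar i| + |p₂ i - pbar i|) * (M * w i) :=
              mul_le_mul htri (hz i) (abs_nonneg _) (by positivity)
          _ = _ := by ring
    _ = (∑ i, w i * |p₁ i - pbar i| + ∑ i, w i * |p₂ i - pbar i|) * M := by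
        rw [← Finset.sum_mul, Finset.sum_add_distrib]
    _ ≤ 2 * ψ * M := mul_le_mul_of_nonneg_right (by linarith) hM
end

section
/- Let S ≥ 1, let w ∈ ℝ^S with w_i > 0 for all i, let p̄ ∈ Δ^S, let ψ ≥ 0, and let z ∈ ℝ^S. Define the ambiguity set 𝒫 = { p ∈ Δ^S : ‖p − p̄‖_{∞,w} ≤ ψ } and its span along z as β(w,ψ) = sup { (p₁ − p₂)ᵀz : p₁, p₂ ∈ 𝒫 }. Then for every λ ∈ ℝ, β(w,ψ) ≤ 2·ψ·Σ_{i=1}^S |z_i − λ| / w_i. (Lemma 4.1 for weighted L∞ ambiguity sets.) -/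
/-! Two points of the simplex have equal total mass, so `(p₁ - p₂)ᵀz` does not change when `z` is
shifted by the constant `lam`. Each coordinate of `p₁ - p₂` is at most `2ψ / w i` in absolute value,
by the triangle inequality through `pbar`, and the bound follows by summing over the coordinates. -/

open Finset

/-- Weighted L∞ norm: `‖y‖_{∞,w} = max_i w i * |y i|`. -/
noncomputable def wLinf {S : ℕ} (w y : Fin S → ℝ) : ℝ := ⨆ i, w i * |y i|

/-- A bound on the weighted L∞ norm bounds each coordinate by `ψ / w i`. -/
theorem abs_le_div_of_wLinf_le {S : ℕ} {w y : Fin S → ℝ} {ψ : ℝ}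
    (hw : ∀ i, 0 < w i) (h : wLinf w y ≤ ψ) (i : Fin S) : |y i| ≤ ψ / w i := by
  rw [le_div_iff₀ (hw i), mul_comm]
  exact (le_ciSup (f := fun i => w i * |y i|) (Set.finite_range _).bddAbove i).trans h

/-- Lemma 4.1 for weighted L∞ ambiguity sets: the span of the ambiguity set
along `z` is bounded by `2 ψ · ∑_i |z i − λ| / w i`. -/
theorem span_bound_weighted_linf {S : ℕ} (hS : 1 ≤ S)
    (w : Fin S → ℝ) (hw : ∀ i, 0 < w i)
    (pbar : Fin S → ℝ) (hpbar : pbar ∈ simplex S)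
    (ψ : ℝ) (hψ : 0 ≤ ψ) (z : Fin S → ℝ) (lam : ℝ) :
    sSup {t : ℝ | ∃ p₁ ∈ {p ∈ simplex S | wLinf w (fun i => p i - pbar i) ≤ ψ},
        ∃ p₂ ∈ {p ∈ simplex S | wLinf w (fun i => p i - pbar i) ≤ ψ},
          t = ∑ i, (p₁ i - p₂ i) * z i}
      ≤ 2 * ψ * ∑ i, |z i - lam| / w i := by
  -- Nonnegativity of the bound covers the junk value of `sSup` on an empty set.
  refine Real.sSup_le ?_ (mul_nonneg (by positivity)
    (Finset.sum_nonneg fun i _ => div_nonneg (abs_nonneg _) (hw i).le))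
  rintro t ⟨p₁, ⟨hp₁, h₁⟩, p₂, ⟨hp₂, h₂⟩, rfl⟩
  have shift : ∑ i, (p₁ i - p₂ i) * z i = ∑ i, (p₁ i - p₂ i) * (z i - lam) := by
    have h0 : ∑ i, (p₁ i - p₂ i) * lam = 0 := by
      rw [← Finset.sum_mul, Finset.sum_sub_distrib, hp₁.2, hp₂.2]
      ring
    simp only [mul_sub, Finset.sum_sub_distrib, h0, sub_zero]
  rw [shift, Finset.mul_sum]
  refine Finset.sum_le_sum fun i _ => ?_
  have b₁ := abs_le_div_of_wLinf_le hw h₁ i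
  have b₂ := abs_le_div_of_wLinf_le hw h₂ i
  have b : |p₁ i - p₂ i| ≤ 2 * (ψ / w i) := by
    rw [abs_le] at b₁ b₂ ⊢
    constructor <;> linarith [b₁.1, b₁.2, b₂.1, b₂.2]
  calc (p₁ i - p₂ i) * (z i - lam) ≤ |p₁ i - p₂ i| * |z i - lam| := by
        rw [← abs_mul]
        exact le_abs_self _
    _ ≤ 2 * (ψ / w i) * |z i - lam| := by gcongr
    _ = 2 * ψ * (|z i - lam| / w i) := by ring
end

section
/- Let S ≥ 1 and let b ∈ ℝ^S with b_i > 0 for all i. Define w* ∈ ℝ^S by w*_i = b_i / sqrt(Σ_{j=1}^S b_j²). Then Σ_{i=1}^S (w*_i)² = 1, max_{1≤i≤S} b_i / w*_i = sqrt(Σ_{j=1}^S b_j²), and for every w ∈ ℝ^S with w_i > 0 for all i and Σ_{i=1}^S w_i² = 1, one has max_{1≤i≤S} b_i / w_i ≥ sqrt(Σ_{j=1}^S b_j²). (Proposition 4.3, q = ∞ case: the weights returned by Algorithm 2 minimize the dual weighted L∞ objective max_i b_i/w_i subject to the normalization Σ w_i² = 1.) -/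
/-!
For `w = w*` every ratio `b i / w i` equals `√(∑ b_j²)`, so the supremum is that constant.
For a general feasible `w` with `M = ⨆ i, b i / w i`, one has `b j ≤ M * w j` for all `j`;
squaring and summing with `∑ w_j² = 1` gives `∑ b_j² ≤ M²`.
-/

open Finset

/-- Proposition 4.3, `q = ∞` case: the weights `w*_i = b_i / √(∑_j b_j²)`
returned by Algorithm 2 minimize the objective `max_i b_i / w_i`
subject to the normalization `∑_i w_i² = 1`. -/
theorem weights_optimal_linf {S : ℕ} (hS : 1 ≤ S)
    (b : Fin S → ℝ) (hb : ∀ i, 0 < b i)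
    (wstar : Fin S → ℝ)
    (hwstar : ∀ i, wstar i = b i / Real.sqrt (∑ j, (b j) ^ 2)) :
    (∑ i, (wstar i) ^ 2 = 1) ∧
    ((⨆ i, b i / wstar i) = Real.sqrt (∑ j, (b j) ^ 2)) ∧
    (∀ w : Fin S → ℝ, (∀ i, 0 < w i) → ∑ i, (w i) ^ 2 = 1 →
      Real.sqrt (∑ j, (b j) ^ 2) ≤ ⨆ i, b i / w i) := by
  have : Nonempty (Fin S) := ⟨⟨0, hS⟩⟩
  have hpos : 0 < ∑ j, (b j) ^ 2 :=
    Finset.sum_pos (fun j _ => pow_pos (hb j) 2) Finset.univ_nonempty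
  refine ⟨?_, ?_, ?_⟩
  · simp only [hwstar, div_pow, Real.sq_sqrt hpos.le]
    rw [← Finset.sum_div, div_self hpos.ne']
  · have h : ∀ i, b i / wstar i = Real.sqrt (∑ j, (b j) ^ 2) := fun i => by
      rw [hwstar i, div_div_cancel₀ (hb i).ne']
    simp only [h, ciSup_const]
  · intro w hw hw1
    have hle : ∀ i, b i / w i ≤ ⨆ i, b i / w i :=
      le_ciSup (Set.finite_range fun i => b i / w i).bddAbove
    have hM : 0 ≤ ⨆ i, b i / w i :=
      Real.iSup_nonneg fun i => (div_pos (hb i) (hw i)).le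
    refine Real.sqrt_le_iff.mpr ⟨hM, ?_⟩
    calc ∑ j, (b j) ^ 2 ≤ ∑ j, ((⨆ i, b i / w i) * w j) ^ 2 :=
          Finset.sum_le_sum fun j _ =>
            pow_le_pow_left₀ (hb j).le ((div_le_iff₀ (hw j)).mp (hle j)) 2
      _ = (⨆ i, b i / w i) ^ 2 := by
          simp only [mul_pow]
          rw [← Finset.mul_sum, hw1, mul_one]
end
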